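/- arXiv:1609.09375 — 4 statements merged into one kernel-verified Lean document; each statement's English description precedes it below -/
import Mathlib

section
/- Leading drift-error term of the leapfrog (paper eq. 18): for i ≠ j and any phase-space point (x,p) with r_ij ≠ 0, the nested canonical Poisson bracket satisfies {{V_ij, T}, T}(x,p) = (G (m i)(m j) / r_ij⁵) · ( ‖v_ij‖² r_ij² − 3 (v_ij · x_ij)² ). -/
open scoped RealInnerProductSpace BigOperators

noncomputable section

/-- Three-dimensional Euclidean space. -/
abbrev E3 : Type := EuclideanSpace ℝ (Fin 3)

/-- Phase space for `N` particles: positions and momenta. -/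
abbrev Phase (N : ℕ) : Type := (Fin N → E3) × (Fin N → E3)

/-- Gradient of a phase-space function with respect to the `k`-th position. -/
def gradPos {N : ℕ} (A : Phase N → ℝ) (k : Fin N) (w : Phase N) : E3 :=
  gradient (fun y => A (Function.update w.1 k y, w.2)) (w.1 k)

/-- Gradient of a phase-space function with respect to the `k`-th momentum. -/
def gradMom {N : ℕ} (A : Phase N → ℝ) (k : Fin N) (w : Phase N) : E3 :=
  gradient (fun y => A (w.1, Function.update w.2 k y)) (w.2 k)

/-- Canonical Poisson bracket of two phase-space functions. -/
def poisson {N : ℕ} (A B : Phase N → ℝ) (w : Phase N) : ℝ :=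
  ∑ k, (⟪gradPos A k w, gradMom B k w⟫ - ⟪gradMom A k w, gradPos B k w⟫)

/-- Kinetic energy `T = Σ_i ‖p_i‖²/(2 m_i)`. -/
def kinetic {N : ℕ} (m : Fin N → ℝ) (w : Phase N) : ℝ :=
  ∑ i, ‖w.2 i‖ ^ 2 / (2 * m i)

/-- Pair potential `V_ij = −G m_i m_j / ‖x_i − x_j‖`. -/
def pairPot {N : ℕ} (G : ℝ) (m : Fin N → ℝ) (i j : Fin N) (w : Phase N) : ℝ :=
  -(G * m i * m j) / ‖w.1 i - w.1 j‖

lemma gradMom_kinetic {N : ℕ} (m : Fin N → ℝ) (k : Fin N) (w : Phase N) :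
    gradMom (kinetic m) k w = (m k)⁻¹ • w.2 k := by
  unfold gradMom
  apply HasGradientAt.gradient
  rw [hasGradientAt_iff_hasFDerivAt]
  have h : (fun y => kinetic m (w.1, Function.update w.2 k y)) =
      fun y : E3 => ‖y‖ ^ 2 / (2 * m k) +
        ∑ i ∈ Finset.univ.erase k, ‖w.2 i‖ ^ 2 / (2 * m i) := by
    funext y
    unfold kinetic
    rw [← Finset.add_sum_erase _ _ (Finset.mem_univ k)]
    congr 1
    · simp
    · apply Finset.sum_congr rfl
      intro i hi
      simp [Function.update_of_ne (Finset.ne_of_mem_erase hi)]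
  rw [h]
  have h1 : HasFDerivAt (fun y : E3 => ‖y‖ ^ 2) (2 • (innerSL ℝ) (w.2 k)) (w.2 k) :=
    (hasStrictFDerivAt_norm_sq (w.2 k)).hasFDerivAt
  have h2 := (h1.mul_const ((2 * m k)⁻¹)).add_const
    (∑ i ∈ Finset.univ.erase k, ‖w.2 i‖ ^ 2 / (2 * m i))
  simp only [div_eq_mul_inv] at h2 ⊢
  refine h2.congr_fderiv ?_
  ext u
  simp
  ring

lemma gradPos_kinetic {N : ℕ} (m : Fin N → ℝ) (k : Fin N) (w : Phase N) :
    gradPos (kinetic m) k w = 0 := by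
  unfold gradPos kinetic
  exact gradient_const (𝕜 := ℝ) (w.1 k) (∑ i, ‖w.2 i‖ ^ 2 / (2 * m i))

/-- The drift direction in phase space. -/
def drift {N : ℕ} (m : Fin N → ℝ) (w : Phase N) : Phase N :=
  (fun k => (m k)⁻¹ • w.2 k, 0)

lemma gradPos_inner {N : ℕ} (A : Phase N → ℝ) (k : Fin N) (w : Phase N)
    (hA : DifferentiableAt ℝ A w) (u : E3) :
    ⟪gradPos A k w, u⟫ = fderiv ℝ A w (Pi.single k u, 0) := by
  have hu : HasFDerivAt (fun y : E3 => ((Function.update w.1 k y, w.2) : Phase N))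
      ((ContinuousLinearMap.single ℝ (fun _ : Fin N => E3) k).prod 0) (w.1 k) := by
    apply HasFDerivAt.prodMk
    · exact (hasFDerivAt_update w.1 (w.1 k)).congr_fderiv (by
        ext y a b
        by_cases h : a = k
        · subst h; simp
        · simp [h])
    · exact hasFDerivAt_const _ _
  have hA' : HasFDerivAt A (fderiv ℝ A w)
      ((Function.update w.1 k (w.1 k), w.2) : Phase N) := by
    simpa using hA.hasFDerivAt
  have h := hA'.comp (w.1 k) hu
  unfold gradPos gradient
  rw [InnerProductSpace.toDual_symm_apply]
  have h' := h.fderiv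
  simp only [Function.comp_def] at h'
  rw [h']
  simp

lemma poisson_kinetic {N : ℕ} (A : Phase N → ℝ) (m : Fin N → ℝ) (w : Phase N)
    (hA : DifferentiableAt ℝ A w) :
    poisson A (kinetic m) w = fderiv ℝ A w (drift m w) := by
  unfold poisson
  simp only [gradMom_kinetic, gradPos_kinetic, inner_zero_right, sub_zero]
  simp only [gradPos_inner A _ w hA]
  rw [← map_sum]
  congr 1
  ext1
  · rw [Prod.fst_sum]
    exact Finset.univ_sum_single _
  · rw [Prod.snd_sum]
    simp [drift]

lemma fderiv_line {N : ℕ} (A : Phase N → ℝ) (w d : Phase N) (c : ℝ)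
    (hA : DifferentiableAt ℝ A w)
    (hc : HasDerivAt (fun t : ℝ => A (w + t • d)) c 0) :
    fderiv ℝ A w d = c := by
  have h1 : HasDerivAt (fun t : ℝ => w + t • d) d 0 := by
    simpa using ((hasDerivAt_id (0 : ℝ)).smul_const d).const_add w
  have h2 : HasFDerivAt A (fderiv ℝ A w) (w + (0 : ℝ) • d) := by
    simpa using hA.hasFDerivAt
  exact (h2.comp_hasDerivAt (0 : ℝ) h1).unique hc

lemma line_deriv (a b : E3) : HasDerivAt (fun t : ℝ => a + t • b) b 0 := by
  simpa using ((hasDerivAt_id (0 : ℝ)).smul_const b).const_add a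

lemma norm_line (a b : E3) (ha : a ≠ 0) :
    HasDerivAt (fun t : ℝ => ‖a + t • b‖) (⟪b, a⟫ / ‖a‖) 0 := by
  have h1 := (line_deriv a b).norm_sq
  have h2 := h1.sqrt (by simpa using ha)
  simp only [Real.sqrt_sq (norm_nonneg _)] at h2
  refine h2.congr_deriv ?_
  simp only [zero_smul, add_zero]
  rw [real_inner_comm, mul_div_mul_left _ _ (two_ne_zero)]

lemma pair_deriv (K : ℝ) (a b : E3) (ha : a ≠ 0) :
    HasDerivAt (fun t : ℝ => -K / ‖a + t • b‖) (K * ⟪b, a⟫ / ‖a‖ ^ 3) 0 := by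
  have hn : ‖a‖ ≠ 0 := norm_ne_zero_iff.2 ha
  have h := (hasDerivAt_const (0 : ℝ) (-K)).fun_div (norm_line a b ha) (by simpa using ha)
  refine h.congr_deriv ?_
  simp only [zero_smul, add_zero]
  field_simp
  ring

lemma pair_deriv2 (K : ℝ) (a b : E3) (ha : a ≠ 0) :
    HasDerivAt (fun t : ℝ => K * ⟪b, a + t • b⟫ / ‖a + t • b‖ ^ 3)
      (K / ‖a‖ ^ 5 * (‖b‖ ^ 2 * ‖a‖ ^ 2 - 3 * ⟪b, a⟫ ^ 2)) 0 := by
  have hn : ‖a‖ ≠ 0 := norm_ne_zero_iff.2 ha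
  have hi := (((hasDerivAt_const (0 : ℝ) b).inner ℝ (line_deriv a b)).const_mul K)
  have h := hi.fun_div ((norm_line a b ha).fun_pow 3) (by simpa using ha)
  refine h.congr_deriv ?_
  simp only [zero_smul, add_zero, inner_zero_left, real_inner_self_eq_norm_sq]
  field_simp
  ring

/-- The first bracket, in closed form. -/
def firstBracket {N : ℕ} (G : ℝ) (m : Fin N → ℝ) (i j : Fin N) (w : Phase N) : ℝ :=
  G * m i * m j * ⟪(m i)⁻¹ • w.2 i - (m j)⁻¹ • w.2 j, w.1 i - w.1 j⟫ / ‖w.1 i - w.1 j‖ ^ 3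

lemma line_fst {N : ℕ} (m : Fin N → ℝ) (i j : Fin N) (w : Phase N) (t : ℝ) :
    (w + t • drift m w).1 i - (w + t • drift m w).1 j =
      (w.1 i - w.1 j) + t • ((m i)⁻¹ • w.2 i - (m j)⁻¹ • w.2 j) := by
  simp only [drift, Prod.fst_add, Prod.smul_fst, Pi.add_apply, Pi.smul_apply, smul_sub]
  abel

lemma line_snd {N : ℕ} (m : Fin N → ℝ) (w : Phase N) (t : ℝ) :
    (w + t • drift m w).2 = w.2 := by
  simp [drift]

lemma first_eq {N : ℕ} (G : ℝ) (m : Fin N → ℝ) (i j : Fin N) (w : Phase N)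
    (hr : w.1 i - w.1 j ≠ 0) :
    poisson (pairPot G m i j) (kinetic m) w = firstBracket G m i j w := by
  have hd : DifferentiableAt ℝ (pairPot G m i j) w := by
    unfold pairPot
    have h1 : DifferentiableAt ℝ (fun w : Phase N => w.1 i - w.1 j) w := by fun_prop
    have h3 := (h1.norm ℝ hr).fun_inv (norm_ne_zero_iff.2 hr)
    simp only [div_eq_mul_inv]
    exact h3.const_mul _
  rw [poisson_kinetic _ _ _ hd]
  apply fderiv_line _ _ _ _ hd
  simp only [pairPot, line_fst]
  exact pair_deriv _ _ _ hr

/-- Leading drift-error term of the leapfrog (paper eq. 18):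
`{{V_ij, T}, T} = (G m_i m_j / r_ij⁵) (v_ij² r_ij² − 3 (v_ij·x_ij)²)`. -/
theorem drift_error_term {N : ℕ} (G : ℝ) (hG : 0 < G) (m : Fin N → ℝ)
    (hm : ∀ i, 0 < m i) (i j : Fin N) (hij : i ≠ j) (w : Phase N)
    (hr : ‖w.1 i - w.1 j‖ ≠ 0) :
    poisson (poisson (pairPot G m i j) (kinetic m)) (kinetic m) w =
      G * m i * m j / ‖w.1 i - w.1 j‖ ^ 5 *
        (‖(m i)⁻¹ • w.2 i - (m j)⁻¹ • w.2 j‖ ^ 2 * ‖w.1 i - w.1 j‖ ^ 2 -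
          3 * ⟪(m i)⁻¹ • w.2 i - (m j)⁻¹ • w.2 j, w.1 i - w.1 j⟫ ^ 2) := by
  have hr' : w.1 i - w.1 j ≠ 0 := norm_ne_zero_iff.1 hr
  have hc : Continuous (fun w : Phase N => w.1 i - w.1 j) := by fun_prop
  have hev : poisson (pairPot G m i j) (kinetic m) =ᶠ[nhds w] firstBracket G m i j := by
    filter_upwards [hc.continuousAt.eventually_ne hr'] with z hz
    exact first_eq G m i j z hz
  have hd : DifferentiableAt ℝ (firstBracket G m i j) w := by
    unfold firstBracket
    have h1 : DifferentiableAt ℝ (fun w : Phase N => w.1 i - w.1 j) w := by fun_prop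
    have h2 : DifferentiableAt ℝ
        (fun w : Phase N => (m i)⁻¹ • w.2 i - (m j)⁻¹ • w.2 j) w := by fun_prop
    have h3 := ((h1.norm ℝ hr').fun_pow 3).fun_inv (pow_ne_zero _ hr)
    simp only [div_eq_mul_inv]
    exact ((h2.inner ℝ h1).const_mul _).fun_mul h3
  rw [poisson_kinetic _ _ _ (hd.congr_of_eventuallyEq hev), hev.fderiv_eq]
  apply fderiv_line _ _ _ _ hd
  simp only [firstBracket, line_fst, line_snd]
  exact pair_deriv2 _ _ _ hr'
end
end

section
/- Three-body kick-error term (paper eq. 19b): for pairwise distinct indices i, j, k and any phase-space point (x,p) with r_ij ≠ 0 and r_ik ≠ 0, the nested canonical Poisson bracket satisfies {{T, V_ij}, V_ik}(x,p) = (G² (m i)(m j)(m k) / (r_ij³ r_ik³)) · (x_ij · x_ik). -/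
open scoped RealInnerProductSpace BigOperators

noncomputable section

open Function in
theorem aux_gradMom_pairPot {N : ℕ} (G : ℝ) (m : Fin N → ℝ) (i j l : Fin N) (w : Phase N) :
    gradMom (pairPot G m i j) l w = 0 := by
  unfold gradMom pairPot
  simp [gradient_fun_const]

theorem aux_gradPos_indep {N : ℕ} (G : ℝ) (m : Fin N → ℝ) (i j l : Fin N) (x p q : Fin N → E3) :
    gradPos (pairPot G m i j) l (x, p) = gradPos (pairPot G m i j) l (x, q) := by
  unfold gradPos pairPot
  rfl

theorem aux_gradMom_kinetic {N : ℕ} (m : Fin N → ℝ) (hm : ∀ i, 0 < m i) (l : Fin N)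
    (w : Phase N) : gradMom (kinetic m) l w = (m l)⁻¹ • w.2 l := by
  unfold gradMom
  apply HasGradientAt.gradient
  rw [hasGradientAt_iff_hasFDerivAt]
  have h1 : (fun y => kinetic m (w.1, Function.update w.2 l y)) =
      fun y => ‖y‖ ^ 2 * (2 * m l)⁻¹
        + ∑ i ∈ Finset.univ.erase l, ‖w.2 i‖ ^ 2 / (2 * m i) := by
    funext y
    unfold kinetic
    rw [← Finset.add_sum_erase _ _ (Finset.mem_univ l)]
    congr 1
    · simp [div_eq_mul_inv]
    · apply Finset.sum_congr rfl
      intro a ha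
      simp [Function.update_of_ne (Finset.ne_of_mem_erase ha)]
  rw [h1]
  have h2 := (((hasStrictFDerivAt_norm_sq (w.2 l)).hasFDerivAt).mul_const
    ((2 * m l)⁻¹)).add_const (∑ i ∈ Finset.univ.erase l, ‖w.2 i‖ ^ 2 / (2 * m i))
  refine h2.congr_fderiv ?_
  ext v
  have := (hm l).ne'
  simp [inner_smul_left]
  field_simp

theorem aux_gradMom_bracket {N : ℕ} (G : ℝ) (m : Fin N → ℝ) (hm : ∀ i, 0 < m i)
    (i j l : Fin N) (w : Phase N) :
    gradMom (poisson (kinetic m) (pairPot G m i j)) l w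
      = -((m l)⁻¹ • gradPos (pairPot G m i j) l w) := by
  unfold gradMom
  apply HasGradientAt.gradient
  rw [hasGradientAt_iff_hasFDerivAt]
  have h1 : (fun y => poisson (kinetic m) (pairPot G m i j) (w.1, Function.update w.2 l y)) =
      fun y => ⟪-((m l)⁻¹ • gradPos (pairPot G m i j) l w), y⟫
        + ∑ a ∈ Finset.univ.erase l,
          -⟪(m a)⁻¹ • w.2 a, gradPos (pairPot G m i j) a w⟫ := by
    funext y
    unfold poisson
    rw [← Finset.add_sum_erase _ _ (Finset.mem_univ l)]
    congr 1
    · rw [aux_gradMom_pairPot, aux_gradMom_kinetic m hm,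
        aux_gradPos_indep G m i j l w.1 _ w.2]
      simp [inner_smul_left, inner_neg_left, real_inner_comm]
    · apply Finset.sum_congr rfl
      intro a ha
      rw [aux_gradMom_pairPot, aux_gradMom_kinetic m hm,
        aux_gradPos_indep G m i j a w.1 _ w.2]
      simp [Function.update_of_ne (Finset.ne_of_mem_erase ha)]
  rw [h1]
  exact ((innerSL ℝ (-((m l)⁻¹ • gradPos (pairPot G m i j) l w))).hasFDerivAt).add_const _

theorem aux_gradPos_other {N : ℕ} (G : ℝ) (m : Fin N → ℝ) (i j l : Fin N) (w : Phase N)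
    (hi : l ≠ i) (hj : l ≠ j) : gradPos (pairPot G m i j) l w = 0 := by
  unfold gradPos pairPot
  simp [Function.update_of_ne hi.symm, Function.update_of_ne hj.symm, gradient_fun_const]

theorem aux_gradPos_self {N : ℕ} (G : ℝ) (m : Fin N → ℝ) (i j : Fin N) (w : Phase N)
    (hij : i ≠ j) (hr : ‖w.1 i - w.1 j‖ ≠ 0) : gradPos (pairPot G m i j) i w
      = (G * m i * m j / ‖w.1 i - w.1 j‖ ^ 3) • (w.1 i - w.1 j) := by
  unfold gradPos pairPot
  apply HasGradientAt.gradient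
  rw [hasGradientAt_iff_hasFDerivAt]
  simp only [Function.update_self, Function.update_of_ne hij.symm]
  have hs : ‖w.1 i - w.1 j‖ ^ 2 ≠ 0 := pow_ne_zero _ hr
  have h0 : HasFDerivAt (fun y : E3 => y - w.1 j) (ContinuousLinearMap.id ℝ E3) (w.1 i) :=
    (hasFDerivAt_id _).sub_const _
  have h1 := ((hasStrictFDerivAt_norm_sq (w.1 i - w.1 j)).hasFDerivAt).comp (w.1 i) h0
  have h2 := h1.sqrt hs
  have h3 := ((hasDerivAt_inv (x := Real.sqrt (‖w.1 i - w.1 j‖ ^ 2))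
    (by rwa [Real.sqrt_sq (norm_nonneg _)])).comp_hasFDerivAt (w.1 i) h2).const_mul
      (-(G * m i * m j))
  have h4 : (fun y : E3 => -(G * m i * m j) / ‖y - w.1 j‖) =
      fun y => -(G * m i * m j) * (Real.sqrt (‖y - w.1 j‖ ^ 2))⁻¹ := by
    funext y
    rw [Real.sqrt_sq (norm_nonneg _), div_eq_mul_inv]
  rw [h4]
  refine HasFDerivAt.congr_fderiv h3 ?_
  ext v
  simp [inner_smul_left, Real.sqrt_sq (norm_nonneg _)]
  field_simp

/-- Three-body kick-error term (paper eq. 19b):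
`{{T, V_ij}, V_ik} = (G² m_i m_j m_k / (r_ij³ r_ik³)) (x_ij · x_ik)`. -/
theorem kick_error_three_body {N : ℕ} (G : ℝ) (hG : 0 < G) (m : Fin N → ℝ)
    (hm : ∀ i, 0 < m i) (i j k : Fin N) (hij : i ≠ j) (hik : i ≠ k)
    (hjk : j ≠ k) (w : Phase N) (hrij : ‖w.1 i - w.1 j‖ ≠ 0)
    (hrik : ‖w.1 i - w.1 k‖ ≠ 0) :
    poisson (poisson (kinetic m) (pairPot G m i j)) (pairPot G m i k) w =
      G ^ 2 * m i * m j * m k / (‖w.1 i - w.1 j‖ ^ 3 * ‖w.1 i - w.1 k‖ ^ 3) *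
        ⟪w.1 i - w.1 j, w.1 i - w.1 k⟫ := by
  unfold poisson
  rw [Finset.sum_eq_single i]
  · have h := aux_gradMom_bracket G m hm i j i w
    unfold poisson at h
    rw [aux_gradMom_pairPot, h, aux_gradPos_self G m i j w hij hrij,
      aux_gradPos_self G m i k w hik hrik]
    have := (hm i).ne'
    simp only [inner_zero_right, inner_neg_left, real_inner_smul_left, real_inner_smul_right]
    field_simp
    ring
  · intro l _ hl
    have h := aux_gradMom_bracket G m hm i j l w
    unfold poisson at h
    rw [aux_gradMom_pairPot, h]
    by_cases hlj : l = j
    · rw [aux_gradPos_other G m i k l w hl (hlj ▸ hjk)]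
      simp
    · rw [aux_gradPos_other G m i j l w hl hlj]
      simp
  · intro h
    exact absurd (Finset.mem_univ i) h
end
end

section
/- Fourth-order three-body error term (paper eq. A18c): for pairwise distinct indices i, j, k and any phase-space point (x,p) with r_ij ≠ 0 and r_ik ≠ 0, the left-nested canonical Poisson bracket satisfies {{{{V_ij, T}, V_ij}, T}, V_ik}(x,p) = −4 (G³ (m i)(m j)(m k)((m i)+(m j)) / (r_ij⁶ r_ik³)) · (x_ij · x_ik). -/
open scoped RealInnerProductSpace BigOperators

noncomputable section

open Topology

lemma fo_update_sub {N : ℕ} (x : Fin N → E3) (i j l : Fin N) (y : E3) :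
    Function.update x l y i - Function.update x l y j =
      (x i - x j) + ((if i = l then (1 : ℝ) else 0) - (if j = l then 1 else 0)) • (y - x l) := by
  by_cases h1 : i = l <;> by_cases h2 : j = l <;>
    simp [Function.update_apply, h1, h2] <;> abel

lemma fo_gradPos_congr {N : ℕ} {A B : Phase N → ℝ} {w : Phase N} (h : A =ᶠ[𝓝 w] B) (l : Fin N) :
    gradPos A l w = gradPos B l w := by
  unfold gradPos
  apply Filter.EventuallyEq.gradient_eq
  have hc : Continuous (fun y : E3 => ((Function.update w.1 l y, w.2) : Phase N)) := by fun_prop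
  have ht : Filter.Tendsto (fun y : E3 => ((Function.update w.1 l y, w.2) : Phase N))
      (𝓝 (w.1 l)) (𝓝 w) := by
    have := hc.tendsto (w.1 l)
    simpa using this
  exact ht.eventually h

lemma fo_gradMom_congr {N : ℕ} {A B : Phase N → ℝ} {w : Phase N} (h : A =ᶠ[𝓝 w] B) (l : Fin N) :
    gradMom A l w = gradMom B l w := by
  unfold gradMom
  apply Filter.EventuallyEq.gradient_eq
  have hc : Continuous (fun y : E3 => ((w.1, Function.update w.2 l y) : Phase N)) := by fun_prop
  have ht : Filter.Tendsto (fun y : E3 => ((w.1, Function.update w.2 l y) : Phase N))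
      (𝓝 (w.2 l)) (𝓝 w) := by
    have := hc.tendsto (w.2 l)
    simpa using this
  exact ht.eventually h

lemma fo_poisson_congr {N : ℕ} {A B : Phase N → ℝ} {w : Phase N} (h : A =ᶠ[𝓝 w] B)
    (F : Phase N → ℝ) : poisson A F w = poisson B F w := by
  unfold poisson
  simp only [fo_gradPos_congr h, fo_gradMom_congr h]

/-- Radial power function of a pair separation. -/
def foRad {N : ℕ} (c : ℝ) (n : ℕ) (i j : Fin N) (w : Phase N) : ℝ :=
  c / ‖w.1 i - w.1 j‖ ^ n

/-- Radial power times `x_ij · v_ij`. -/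
def foVel {N : ℕ} (m : Fin N → ℝ) (c : ℝ) (n : ℕ) (i j : Fin N) (w : Phase N) : ℝ :=
  c / ‖w.1 i - w.1 j‖ ^ n * ⟪w.1 i - w.1 j, (1 / m i) • w.2 i - (1 / m j) • w.2 j⟫

/-- Incidence sign of a pair. -/
def foSgn {N : ℕ} (i j l : Fin N) : ℝ :=
  (if i = l then (1 : ℝ) else 0) - (if j = l then 1 else 0)

lemma fo_hasFDerivAt_rad (c : ℝ) (n : ℕ) (u : E3) (hu : ‖u‖ ≠ 0) :
    HasFDerivAt (fun y : E3 => c / ‖y‖ ^ n) ((-(n * c) / ‖u‖ ^ (n + 2)) • innerSL ℝ u) u := by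
  have h1 : HasFDerivAt (fun y : E3 => ‖y‖ ^ 2) (2 • innerSL ℝ u) u :=
    (hasStrictFDerivAt_norm_sq u).hasFDerivAt
  have h2 := h1.sqrt (by positivity)
  simp only [Real.sqrt_sq (norm_nonneg _)] at h2
  have h3 : HasDerivAt (fun t : ℝ => c / t ^ n) (-(n * c) / ‖u‖ ^ (n + 1)) ‖u‖ := by
    have h := (hasDerivAt_const ‖u‖ c).div (hasDerivAt_pow n ‖u‖) (pow_ne_zero n hu)
    refine h.congr_deriv ?_
    rcases n with _ | n
    · simp
    · simp only [Nat.add_sub_cancel]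
      field_simp
      ring
  refine (h3.comp_hasFDerivAt u h2).congr_fderiv ?_
  ext v
  simp
  field_simp
  ring

lemma fo_gradPos_rad {N : ℕ} (c : ℝ) (n : ℕ) (i j l : Fin N) (w : Phase N)
    (hr : ‖w.1 i - w.1 j‖ ≠ 0) :
    gradPos (foRad c n i j) l w =
      (foSgn i j l * (-(n * c) / ‖w.1 i - w.1 j‖ ^ (n + 2))) • (w.1 i - w.1 j) := by
  unfold gradPos foRad
  apply HasGradientAt.gradient
  rw [hasGradientAt_iff_hasFDerivAt]
  simp only [fo_update_sub]
  have h1 : HasFDerivAt (fun y : E3 => (w.1 i - w.1 j) + foSgn i j l • (y - w.1 l))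
      (foSgn i j l • ContinuousLinearMap.id ℝ E3) (w.1 l) :=
    (((hasFDerivAt_id _).sub_const _).fun_const_smul _).const_add _
  have h2 : HasFDerivAt (fun y : E3 => c / ‖y‖ ^ n)
      ((-(n * c) / ‖w.1 i - w.1 j‖ ^ (n + 2)) • innerSL ℝ (w.1 i - w.1 j))
      ((w.1 i - w.1 j) + foSgn i j l • (w.1 l - w.1 l)) := by
    simpa using fo_hasFDerivAt_rad c n (w.1 i - w.1 j) hr
  refine (h2.comp (w.1 l) h1).congr_fderiv ?_
  ext v
  simp [inner_smul_left]
  ring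

lemma fo_gradMom_rad {N : ℕ} (c : ℝ) (n : ℕ) (i j l : Fin N) (w : Phase N) :
    gradMom (foRad c n i j) l w = 0 := by
  unfold gradMom foRad
  simp

lemma fo_gradPos_kin {N : ℕ} (m : Fin N → ℝ) (l : Fin N) (w : Phase N) :
    gradPos (kinetic m) l w = 0 := by
  unfold gradPos kinetic
  simp

lemma fo_gradMom_kin {N : ℕ} (m : Fin N → ℝ) (l : Fin N) (w : Phase N) :
    gradMom (kinetic m) l w = (1 / m l) • w.2 l := by
  unfold gradMom kinetic
  apply HasGradientAt.gradient
  rw [hasGradientAt_iff_hasFDerivAt]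
  have h1 : HasFDerivAt (fun y : E3 => ‖y‖ ^ 2) (2 • innerSL ℝ (w.2 l)) (w.2 l) :=
    (hasStrictFDerivAt_norm_sq _).hasFDerivAt
  have h2 := (h1.const_mul (1 / (2 * m l))).add_const
    (∑ a ∈ Finset.univ.erase l, ‖w.2 a‖ ^ 2 / (2 * m a))
  have h3 : (fun y : E3 => ∑ a, ‖Function.update w.2 l y a‖ ^ 2 / (2 * m a)) =
      fun y : E3 => 1 / (2 * m l) * ‖y‖ ^ 2 +
        ∑ a ∈ Finset.univ.erase l, ‖w.2 a‖ ^ 2 / (2 * m a) := by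
    funext y
    rw [← Finset.add_sum_erase _ _ (Finset.mem_univ l)]
    congr 1
    · simp; ring
    · apply Finset.sum_congr rfl
      intro a ha
      rw [Function.update_of_ne (Finset.ne_of_mem_erase ha)]
  rw [h3]
  refine h2.congr_fderiv ?_
  ext v
  simp [inner_smul_left]
  ring

lemma fo_gradMom_vel {N : ℕ} (m : Fin N → ℝ) (c : ℝ) (n : ℕ) (i j l : Fin N) (w : Phase N) :
    gradMom (foVel m c n i j) l w =
      (foSgn i j l * (1 / m l) * (c / ‖w.1 i - w.1 j‖ ^ n)) • (w.1 i - w.1 j) := by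
  unfold gradMom foVel
  apply HasGradientAt.gradient
  rw [hasGradientAt_iff_hasFDerivAt]
  have h1 : (fun y : E3 => (1 / m i) • Function.update w.2 l y i -
      (1 / m j) • Function.update w.2 l y j) = fun y : E3 =>
      (foSgn i j l * (1 / m l)) • (y - w.2 l) +
        ((1 / m i) • w.2 i - (1 / m j) • w.2 j) := by
    funext y
    unfold foSgn
    by_cases h1 : i = l <;> by_cases h2 : j = l <;>
      simp [Function.update_apply, h1, h2, smul_sub] <;> abel
  have h2 : HasFDerivAt (fun y : E3 => (foSgn i j l * (1 / m l)) • (y - w.2 l) +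
        ((1 / m i) • w.2 i - (1 / m j) • w.2 j))
      ((foSgn i j l * (1 / m l)) • ContinuousLinearMap.id ℝ E3) (w.2 l) :=
    (((hasFDerivAt_id _).sub_const _).fun_const_smul _).add_const _
  rw [← h1] at h2
  have h3 := (((innerSL ℝ (w.1 i - w.1 j)).hasFDerivAt.comp (w.2 l) h2).const_mul
    (c / ‖w.1 i - w.1 j‖ ^ n))
  refine h3.congr_fderiv ?_
  ext v
  simp [inner_smul_left]
  ring

lemma fo_sum_sgn {N : ℕ} (i j : Fin N) (f : Fin N → ℝ) :
    ∑ l, foSgn i j l * f l = f i - f j := by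
  simp [foSgn, sub_mul, Finset.sum_sub_distrib]

lemma fo_poisson_rad_kin {N : ℕ} (m : Fin N → ℝ) (c : ℝ) (n : ℕ) (i j : Fin N) (w : Phase N)
    (hr : ‖w.1 i - w.1 j‖ ≠ 0) :
    poisson (foRad c n i j) (kinetic m) w = foVel m (-(n * c)) (n + 2) i j w := by
  unfold poisson
  simp only [fo_gradPos_rad c n i j _ w hr, fo_gradMom_rad, fo_gradPos_kin, fo_gradMom_kin,
    inner_zero_left, sub_zero, inner_smul_left, inner_smul_right, conj_trivial, mul_assoc, mul_left_comm (1 / m _)]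
  rw [fo_sum_sgn]
  simp only [foVel, inner_sub_right, inner_smul_right]
  ring

lemma fo_poisson_vel_rad {N : ℕ} (m : Fin N → ℝ) (c d : ℝ) (n n' : ℕ) (i j i' j' : Fin N)
    (w : Phase N) (hr : ‖w.1 i' - w.1 j'‖ ≠ 0) :
    poisson (foVel m c n i j) (foRad d n' i' j') w =
      (foSgn i j i' / m i' - foSgn i j j' / m j') * (c / ‖w.1 i - w.1 j‖ ^ n) *
        (n' * d / ‖w.1 i' - w.1 j'‖ ^ (n' + 2)) * ⟪w.1 i - w.1 j, w.1 i' - w.1 j'⟫ := by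
  unfold poisson
  simp only [fo_gradPos_rad d n' i' j' _ w hr, fo_gradMom_rad, fo_gradMom_vel,
    inner_zero_right, zero_sub, inner_smul_left, inner_smul_right, conj_trivial, mul_assoc]
  rw [Finset.sum_neg_distrib, fo_sum_sgn]
  ring

lemma fo_pairPot {N : ℕ} (G : ℝ) (m : Fin N → ℝ) (i j : Fin N) :
    pairPot G m i j = foRad (-(G * m i * m j)) 1 i j := by
  funext w
  simp [pairPot, foRad]

lemma fo_eventually {N : ℕ} (i j : Fin N) (w : Phase N) (hr : ‖w.1 i - w.1 j‖ ≠ 0) :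
    ∀ᶠ z in 𝓝 w, ‖z.1 i - z.1 j‖ ≠ 0 := by
  have hc : Continuous (fun z : Phase N => ‖z.1 i - z.1 j‖) := by fun_prop
  exact hc.continuousAt.eventually_ne hr

/-- Fourth-order three-body error term (paper eq. A18c):
`{{{{V_ij,T},V_ij},T},V_ik}
  = −4 (G³ m_i m_j m_k (m_i + m_j) / (r_ij⁶ r_ik³)) (x_ij·x_ik)`. -/
theorem fourth_order_VTVTV_three_body {N : ℕ} (G : ℝ) (hG : 0 < G)
    (m : Fin N → ℝ) (hm : ∀ i, 0 < m i) (i j k : Fin N)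
    (hij : i ≠ j) (hik : i ≠ k) (hjk : j ≠ k) (w : Phase N)
    (hrij : ‖w.1 i - w.1 j‖ ≠ 0) (hrik : ‖w.1 i - w.1 k‖ ≠ 0) :
    poisson (poisson (poisson (poisson (pairPot G m i j) (kinetic m))
        (pairPot G m i j)) (kinetic m)) (pairPot G m i k) w =
      -4 * (G ^ 3 * m i * m j * m k * (m i + m j) /
          (‖w.1 i - w.1 j‖ ^ 6 * ‖w.1 i - w.1 k‖ ^ 3)) *
        ⟪w.1 i - w.1 j, w.1 i - w.1 k⟫ := by
  simp only [fo_pairPot]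
  have hmi := (hm i).ne'
  have hmj := (hm j).ne'
  have key : ∀ z : Phase N, ‖z.1 i - z.1 j‖ ≠ 0 →
      poisson (poisson (foRad (-(G * m i * m j)) 1 i j) (kinetic m))
        (foRad (-(G * m i * m j)) 1 i j) z =
      foRad (-(G ^ 2 * m i * m j * (m i + m j))) 4 i j z := by
    intro z hz
    have hA : poisson (foRad (-(G * m i * m j)) 1 i j) (kinetic m) =ᶠ[𝓝 z]
        foVel m (-((1 : ℕ) * (-(G * m i * m j)))) (1 + 2) i j := by
      filter_upwards [fo_eventually i j z hz] with y hy
      exact fo_poisson_rad_kin m _ 1 i j y hy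
    rw [fo_poisson_congr hA, fo_poisson_vel_rad _ _ _ _ _ _ _ _ _ _ hz,
      real_inner_self_eq_norm_sq]
    simp [foSgn, foRad, hij, hij.symm]
    field_simp
    ring
  have hC : ∀ z : Phase N, ‖z.1 i - z.1 j‖ ≠ 0 →
      poisson (poisson (poisson (foRad (-(G * m i * m j)) 1 i j) (kinetic m))
        (foRad (-(G * m i * m j)) 1 i j)) (kinetic m) z =
      foVel m (-((4 : ℕ) * (-(G ^ 2 * m i * m j * (m i + m j))))) (4 + 2) i j z := by
    intro z hz
    have hB : poisson (poisson (foRad (-(G * m i * m j)) 1 i j) (kinetic m))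
        (foRad (-(G * m i * m j)) 1 i j) =ᶠ[𝓝 z]
        foRad (-(G ^ 2 * m i * m j * (m i + m j))) 4 i j := by
      filter_upwards [fo_eventually i j z hz] with y hy
      exact key y hy
    rw [fo_poisson_congr hB, fo_poisson_rad_kin _ _ _ _ _ _ hz]
  have hD := (fo_eventually i j w hrij).mono hC
  rw [fo_poisson_congr hD, fo_poisson_vel_rad _ _ _ _ _ _ _ _ _ _ hrik]
  simp [foSgn, hij.symm, hik, hjk]
  field_simp
end
end

section
/- Fourth-order four-body error term (paper eq. A19c): for pairwise distinct indices i, j, k, l and any phase-space point (x,p) with r_ij ≠ 0, r_ik ≠ 0 and r_jl ≠ 0, the left-nested canonical Poisson bracket satisfies {{{{V_ij, T}, V_ik}, T}, V_jl}(x,p) = (G³ (m i)(m j)(m k)(m l) / (r_ij⁵ r_ik³ r_jl³)) · ( 3 (x_ij · x_ik)(x_ij · x_jl) − r_ij² (x_ik · x_jl) ). -/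
open scoped RealInnerProductSpace BigOperators

noncomputable section

lemma hasFDerivAt_norm_aux {z : E3} (hz : z ≠ 0) :
    HasFDerivAt (fun z : E3 => ‖z‖) (‖z‖⁻¹ • innerSL ℝ z) z := by
  have hn : ‖z‖ ≠ 0 := norm_ne_zero_iff.mpr hz
  have h := ((hasFDerivAt_id z).norm_sq).sqrt (by simpa using hz)
  have e : (fun z : E3 => √(‖id z‖ ^ 2)) = fun z : E3 => ‖z‖ := by
    funext z; simp [Real.sqrt_sq]
  rw [e] at h
  refine h.congr_fderiv ?_
  ext v
  simp [Real.sqrt_sq]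
  field_simp

/-- weight of particle `k` in the difference `i - j`. -/
def wt {N : ℕ} (i j k : Fin N) : ℝ := (if k = i then 1 else 0) - (if k = j then 1 else 0)

lemma hasFDerivAt_upd {N : ℕ} (x : Fin N → E3) (i k : Fin N) (y : E3) :
    HasFDerivAt (fun y => Function.update x k y i)
      ((if k = i then (1 : ℝ) else 0) • ContinuousLinearMap.id ℝ E3) y := by
  by_cases h : k = i
  · subst h
    have e : (fun y => Function.update x k y k) = id := by
      funext y; simp
    rw [e]
    refine (hasFDerivAt_id y).congr_fderiv ?_
    ext1 v
    simp
  · have : (fun y => Function.update x k y i) = fun _ => x i := by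
      funext y; rw [Function.update_of_ne (Ne.symm h)]
    rw [this]
    refine (hasFDerivAt_const (x i) y).congr_fderiv ?_
    ext1 v
    rw [_root_.smul_apply, if_neg h, zero_smul]
    rfl

lemma hasFDerivAt_diff {N : ℕ} (x : Fin N → E3) (i j k : Fin N) (y : E3) :
    HasFDerivAt (fun y => Function.update x k y i - Function.update x k y j)
      (wt i j k • ContinuousLinearMap.id ℝ E3) y := by
  refine ((hasFDerivAt_upd x i k y).sub (hasFDerivAt_upd x j k y)).congr_fderiv ?_
  ext1 v
  simp only [_root_.smul_apply, _root_.sub_apply, wt, sub_smul]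

lemma gradient_of_fderiv {f : E3 → ℝ} {L : E3 →L[ℝ] ℝ} {y g : E3} (h : HasFDerivAt f L y)
    (hL : ∀ v, L v = ⟪g, v⟫) : gradient f y = g := by
  apply HasGradientAt.gradient
  rw [hasGradientAt_iff_hasFDerivAt]
  refine h.congr_fderiv ?_
  ext v
  simp [hL]

lemma gradMom_pairPot {N : ℕ} (G : ℝ) (m : Fin N → ℝ) (i j k : Fin N) (w : Phase N) :
    gradMom (pairPot G m i j) k w = 0 := by
  unfold gradMom pairPot
  dsimp only
  exact gradient_fun_const (𝕜 := ℝ) (F := E3) _ _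

lemma gradPos_pairPot {N : ℕ} (G : ℝ) (m : Fin N → ℝ) (i j k : Fin N) (w : Phase N)
    (h : w.1 i - w.1 j ≠ 0) :
    gradPos (pairPot G m i j) k w =
      (wt i j k * (G * m i * m j / ‖w.1 i - w.1 j‖ ^ 3)) • (w.1 i - w.1 j) := by
  unfold gradPos pairPot
  have e : (Function.update w.1 k (w.1 k) i - Function.update w.1 k (w.1 k) j)
      = w.1 i - w.1 j := by simp
  have hn : ‖w.1 i - w.1 j‖ ≠ 0 := norm_ne_zero_iff.mpr h
  have h1 := (hasFDerivAt_norm_aux (z := Function.update w.1 k (w.1 k) i -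
    Function.update w.1 k (w.1 k) j) (by rwa [e])).comp (w.1 k)
    (hasFDerivAt_diff w.1 i j k (w.1 k))
  have h2 := ((hasDerivAt_inv (x := ‖Function.update w.1 k (w.1 k) i -
    Function.update w.1 k (w.1 k) j‖) (by rwa [e])).comp_hasFDerivAt (w.1 k) h1).const_mul
    (-(G * m i * m j))
  refine gradient_of_fderiv h2 ?_
  intro v
  simp [real_inner_smul_left, inner_sub_left]
  field_simp

lemma sum_wt {N : ℕ} (i j : Fin N) (f : Fin N → ℝ) : ∑ k, wt i j k * f k = f i - f j := by
  simp [wt, sub_mul, Finset.sum_sub_distrib]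

lemma poisson_kinetic_s19 {N : ℕ} (A : Phase N → ℝ) (m : Fin N → ℝ) (w : Phase N) :
    poisson A (kinetic m) w = ∑ k, ⟪gradPos A k w, (m k)⁻¹ • w.2 k⟫ := by
  simp only [poisson, gradMom_kinetic, gradPos_kinetic, inner_zero_right, sub_zero]

lemma poisson_pairPot {N : ℕ} (A : Phase N → ℝ) (G : ℝ) (m : Fin N → ℝ) (i j : Fin N)
    (w : Phase N) (h : w.1 i - w.1 j ≠ 0) :
    poisson A (pairPot G m i j) w = -(G * m i * m j / ‖w.1 i - w.1 j‖ ^ 3) *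
      (⟪gradMom A i w, w.1 i - w.1 j⟫ - ⟪gradMom A j w, w.1 i - w.1 j⟫) := by
  simp only [poisson, gradMom_pairPot, gradPos_pairPot G m i j _ w h, inner_zero_right, zero_sub,
    real_inner_smul_right, mul_assoc, Finset.sum_neg_distrib, sum_wt]
  ring

lemma step1 {N : ℕ} (G : ℝ) (m : Fin N → ℝ) (i j : Fin N) (w : Phase N)
    (h : w.1 i - w.1 j ≠ 0) :
    poisson (pairPot G m i j) (kinetic m) w =
      G * m i * m j / ‖w.1 i - w.1 j‖ ^ 3 *
        ⟪w.1 i - w.1 j, (m i)⁻¹ • w.2 i - (m j)⁻¹ • w.2 j⟫ := by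
  rw [poisson_kinetic_s19]
  simp only [gradPos_pairPot G m i j _ w h, real_inner_smul_left, mul_assoc, sum_wt, inner_sub_right]
  ring

lemma step2 {N : ℕ} (G : ℝ) (m : Fin N → ℝ) (i j k : Fin N) (w : Phase N)
    (h : w.1 i - w.1 j ≠ 0) :
    gradMom (poisson (pairPot G m i j) (kinetic m)) k w =
      (G * m i * m j / ‖w.1 i - w.1 j‖ ^ 3 *
       ((m i)⁻¹ * (if k = i then 1 else 0) - (m j)⁻¹ * (if k = j then 1 else 0))) •
        (w.1 i - w.1 j) := by
  unfold gradMom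
  have e : ∀ p, poisson (pairPot G m i j) (kinetic m) (w.1, p) = _ :=
    fun p => step1 G m i j (w.1, p) h
  simp only [e]
  refine gradient_of_fderiv ((((innerSL ℝ (w.1 i - w.1 j)).hasFDerivAt.comp (w.2 k)
    (((hasFDerivAt_upd w.2 i k (w.2 k)).const_smul (m i)⁻¹).sub
      ((hasFDerivAt_upd w.2 j k (w.2 k)).const_smul (m j)⁻¹))).const_mul
      (G * m i * m j / ‖w.1 i - w.1 j‖ ^ 3))) ?_
  intro v
  simp only [_root_.smul_apply, ContinuousLinearMap.comp_apply,
    _root_.sub_apply, ContinuousLinearMap.id_apply, innerSL_apply_apply,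
    inner_sub_right, real_inner_smul_left, real_inner_smul_right, smul_eq_mul]
  ring

lemma step3 {N : ℕ} (G : ℝ) (m : Fin N → ℝ) (hm : ∀ i, 0 < m i) (i j k : Fin N)
    (hij : i ≠ j) (hik : i ≠ k) (hjk : j ≠ k) (w : Phase N)
    (h : w.1 i - w.1 j ≠ 0) (h' : w.1 i - w.1 k ≠ 0) :
    poisson (poisson (pairPot G m i j) (kinetic m)) (pairPot G m i k) w =
      -(G ^ 2 * m i * m j * m k) * ⟪w.1 i - w.1 j, w.1 i - w.1 k⟫ /
        (‖w.1 i - w.1 j‖ ^ 3 * ‖w.1 i - w.1 k‖ ^ 3) := by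
  rw [poisson_pairPot _ _ _ _ _ _ h', step2 _ _ _ _ _ _ h, step2 _ _ _ _ _ _ h]
  have := (hm i).ne'
  have h1 : ‖w.1 i - w.1 j‖ ≠ 0 := norm_ne_zero_iff.mpr h
  have h2 : ‖w.1 i - w.1 k‖ ≠ 0 := norm_ne_zero_iff.mpr h'
  simp only [real_inner_smul_left, hij, hik.symm, hjk.symm, if_true, if_false]
  field_simp
  ring

/-- Explicit form of the second-order bracket. -/
def Fx {N : ℕ} (G : ℝ) (m : Fin N → ℝ) (i j k : Fin N) (x : Fin N → E3) : ℝ :=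
  -(G ^ 2 * m i * m j * m k) * ⟪x i - x j, x i - x k⟫ / (‖x i - x j‖ ^ 3 * ‖x i - x k‖ ^ 3)

lemma step4 {N : ℕ} (G : ℝ) (m : Fin N → ℝ) (hm : ∀ i, 0 < m i) (i j k : Fin N)
    (hij : i ≠ j) (hik : i ≠ k) (hjk : j ≠ k) (n : Fin N) (w : Phase N)
    (h : w.1 i - w.1 j ≠ 0) (h' : w.1 i - w.1 k ≠ 0) :
    gradPos (poisson (poisson (pairPot G m i j) (kinetic m)) (pairPot G m i k)) n w =
      gradient (fun y => Fx G m i j k (Function.update w.1 n y)) (w.1 n) := by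
  unfold gradPos
  have c1 := (hasFDerivAt_diff w.1 i j n (w.1 n)).continuousAt.eventually_ne
    (y := 0) (by simpa using h)
  have c2 := (hasFDerivAt_diff w.1 i k n (w.1 n)).continuousAt.eventually_ne
    (y := 0) (by simpa using h')
  apply Filter.EventuallyEq.gradient_eq
  filter_upwards [c1, c2] with y y1 y2
  exact step3 G m hm i j k hij hik hjk (_, w.2) y1 y2

lemma step5 {N : ℕ} (G : ℝ) (m : Fin N → ℝ) (hm : ∀ i, 0 < m i) (i j k : Fin N)
    (hij : i ≠ j) (hik : i ≠ k) (hjk : j ≠ k) (n : Fin N) (w : Phase N)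
    (h : w.1 i - w.1 j ≠ 0) (h' : w.1 i - w.1 k ≠ 0) :
    gradMom (poisson (poisson (poisson (pairPot G m i j) (kinetic m)) (pairPot G m i k))
      (kinetic m)) n w =
      (m n)⁻¹ • gradient (fun y => Fx G m i j k (Function.update w.1 n y)) (w.1 n) := by
  unfold gradMom
  have e : ∀ n p, gradPos (poisson (poisson (pairPot G m i j) (kinetic m))
      (pairPot G m i k)) n (w.1, p) = _ :=
    fun n p => step4 G m hm i j k hij hik hjk n (w.1, p) h h'
  simp only [poisson_kinetic_s19 _ m (w.1, _), e]
  refine gradient_of_fderiv (HasFDerivAt.fun_sum (u := Finset.univ) fun a _ =>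
    (innerSL ℝ (gradient (fun y => Fx G m i j k (Function.update w.1 a y))
      (w.1 a))).hasFDerivAt.comp (w.2 n)
    ((hasFDerivAt_upd w.2 a n (w.2 n)).const_smul (m a)⁻¹)) ?_
  intro v
  simp only [_root_.sum_apply, _root_.smul_apply,
    ContinuousLinearMap.comp_apply, ContinuousLinearMap.id_apply,
    innerSL_apply_apply, real_inner_smul_left, real_inner_smul_right]
  simp

lemma grad_l {N : ℕ} (G : ℝ) (m : Fin N → ℝ) (i j k l : Fin N)
    (hil : i ≠ l) (hjl : j ≠ l) (hkl : k ≠ l) (x : Fin N → E3) :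
    gradient (fun y => Fx G m i j k (Function.update x l y)) (x l) = 0 := by
  unfold Fx
  simp only [Function.update_of_ne hil, Function.update_of_ne hjl, Function.update_of_ne hkl]
  exact gradient_fun_const (𝕜 := ℝ) (F := E3) _ _

lemma grad_j {N : ℕ} (G : ℝ) (m : Fin N → ℝ) (i j k : Fin N)
    (hij : i ≠ j) (hjk : j ≠ k) (x : Fin N → E3)
    (h : x i - x j ≠ 0) (h' : x i - x k ≠ 0) :
    gradient (fun y => Fx G m i j k (Function.update x j y)) (x j) =
      (-(G ^ 2 * m i * m j * m k) / (‖x i - x j‖ ^ 5 * ‖x i - x k‖ ^ 3)) •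
       ((3 * ⟪x i - x j, x i - x k⟫) • (x i - x j) - ‖x i - x j‖ ^ 2 • (x i - x k)) := by
  unfold Fx
  simp only [Function.update_of_ne hij, Function.update_of_ne hjk.symm, Function.update_self]
  have h1 : ‖x i - x j‖ ≠ 0 := norm_ne_zero_iff.mpr h
  have h2 : ‖x i - x k‖ ≠ 0 := norm_ne_zero_iff.mpr h'
  have d := (hasFDerivAt_id (𝕜 := ℝ) (x j)).const_sub (x i)
  have dn := ((hasFDerivAt_norm_aux h).comp (x j) d).pow 3
  have di := (hasDerivAt_inv (pow_ne_zero 3 h1)).comp_hasFDerivAt (x j) dn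
  have dd := ((((d.inner ℝ (hasFDerivAt_const (x i - x k) (x j))).mul di).const_mul
    (-(G ^ 2 * m i * m j * m k) / ‖x i - x k‖ ^ 3)))
  have e : (fun y => -(G ^ 2 * m i * m j * m k) * ⟪x i - y, x i - x k⟫ /
      (‖x i - y‖ ^ 3 * ‖x i - x k‖ ^ 3)) = fun y =>
      (-(G ^ 2 * m i * m j * m k) / ‖x i - x k‖ ^ 3) *
        (⟪x i - y, x i - x k⟫ * (‖x i - y‖ ^ 3)⁻¹) := by
    funext y
    simp only [div_eq_mul_inv, mul_inv]
    ring
  rw [e]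
  refine gradient_of_fderiv dd ?_
  intro v
  generalize x i - x k = b at *
  rw [real_inner_smul_left, inner_sub_left ((3 * _) • _) _ v, real_inner_smul_left (x i - x j),
    real_inner_smul_left b]
  simp [inner_sub_left]
  rw [real_inner_comm v b]
  field_simp
  ring

/-- Fourth-order four-body error term (paper eq. A19c):
`{{{{V_ij,T},V_ik},T},V_jl}
  = (G³ m_i m_j m_k m_l / (r_ij⁵ r_ik³ r_jl³))
    (3 (x_ij·x_ik)(x_ij·x_jl) − r_ij² (x_ik·x_jl))`. -/
theorem fourth_order_four_body {N : ℕ} (G : ℝ) (hG : 0 < G)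
    (m : Fin N → ℝ) (hm : ∀ i, 0 < m i) (i j k l : Fin N)
    (hij : i ≠ j) (hik : i ≠ k) (hil : i ≠ l) (hjk : j ≠ k) (hjl : j ≠ l)
    (hkl : k ≠ l) (w : Phase N)
    (hrij : ‖w.1 i - w.1 j‖ ≠ 0) (hrik : ‖w.1 i - w.1 k‖ ≠ 0)
    (hrjl : ‖w.1 j - w.1 l‖ ≠ 0) (xij xik xjl : E3)
    (hxij : xij = w.1 i - w.1 j) (hxik : xik = w.1 i - w.1 k)
    (hxjl : xjl = w.1 j - w.1 l) :
    poisson (poisson (poisson (poisson (pairPot G m i j) (kinetic m))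
        (pairPot G m i k)) (kinetic m)) (pairPot G m j l) w =
      G ^ 3 * m i * m j * m k * m l /
          (‖xij‖ ^ 5 * ‖xik‖ ^ 3 * ‖xjl‖ ^ 3) *
        (3 * ⟪xij, xik⟫ * ⟪xij, xjl⟫ - ‖xij‖ ^ 2 * ⟪xik, xjl⟫) := by
  have h1 : w.1 i - w.1 j ≠ 0 := norm_ne_zero_iff.mp hrij
  have h2 : w.1 i - w.1 k ≠ 0 := norm_ne_zero_iff.mp hrik
  have h3 : w.1 j - w.1 l ≠ 0 := norm_ne_zero_iff.mp hrjl
  have := (hm j).ne'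
  rw [poisson_pairPot _ _ _ _ _ _ h3, step5 G m hm i j k hij hik hjk _ w h1 h2,
    step5 G m hm i j k hij hik hjk _ w h1 h2, grad_l G m i j k l hil hjl hkl,
    grad_j G m i j k hij hjk w.1 h1 h2, ← hxij, ← hxik, ← hxjl]
  rw [← hxij] at hrij
  rw [← hxik] at hrik
  rw [← hxjl] at hrjl
  simp only [real_inner_smul_left, inner_sub_left, smul_zero, inner_zero_left]
  field_simp
  ring
end
end
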